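/- arXiv:2303.09815 — 2 statements merged into one kernel-verified Lean document; each statement's English description precedes it below -/
import Mathlib

section
/- Every free group is residually a 𝒞-group, where 𝒞 is any root class of groups. -/
universe u

/-- A class of groups: a predicate on groups. -/
def GClass : Type (u + 1) := ∀ (G : Type u) [Group G], Prop

/-- Closure under isomorphism. -/
def ClosedIso (C : GClass.{u}) : Prop :=
  ∀ (G H : Type u) [Group G] [Group H], (G ≃* H) → C G → C H

/-- Closure under taking subgroups. -/
def ClosedSub (C : GClass.{u}) : Prop :=
  ∀ (G : Type u) [Group G] (H : Subgroup G), C G → C H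

/-- Closure under extensions. -/
def ClosedExt (C : GClass.{u}) : Prop :=
  ∀ (G : Type u) [Group G] (N : Subgroup G) [N.Normal], C N → C (G ⧸ N) → C G

/-- Closure under unrestricted direct powers ∏_{y ∈ Y} X with X, Y ∈ C. -/
def ClosedPow (C : GClass.{u}) : Prop :=
  ∀ (X Y : Type u) [Group X] [Group Y], C X → C Y → C (Y → X)

/-- A root class of groups. -/
def IsRootClass (C : GClass.{u}) : Prop :=
  (∃ (G : Type u) (_ : Group G), C G ∧ Nontrivial G) ∧
    ClosedIso C ∧ ClosedSub C ∧ ClosedExt C ∧ ClosedPow C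

/-- `G` is residually a `C`-group. -/
def Residually (C : GClass.{u}) (G : Type u) [Group G] : Prop :=
  ∀ g : G, g ≠ 1 → ∃ (Q : Type u) (_ : Group Q) (σ : G →* Q),
    C Q ∧ Function.Surjective σ ∧ σ g ≠ 1

/-!
Let `w = c₀ c₁ ⋯ cₙ` be a nonempty reduced word. By induction on length, every proper nonempty
subword of `w` survives in some group of `C`, hence they all survive under a single
`φ : FreeGroup α →* Q` with `C Q`. In the Cayley graph of `Q` the path spelled by `w` from `1` then
visits distinct vertices, except that it may close up at the end; as `w` is reduced, it crosses its
first edge only once. Put the label `a ≠ 1`, taken from a nontrivial `P` with `C P`, on that edge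
and the label `1` on all others. The labels lift `φ` to a homomorphism to `P ≀ᵣ Q` that reads off
the product of the labels along a path, and for `w` this product is `a` or `a⁻¹`.
-/

universe v

open FreeGroup (IsReduced isReduced_cons_cons of)

section RootClass

variable {C : GClass.{u}}

theorem ClosedExt.of_groupExtension (hExt : ClosedExt C) (hIso : ClosedIso C)
    {N E G : Type u} [Group N] [Group E] [Group G] (S : GroupExtension N E G)
    (hN : C N) (hG : C G) : C E := by
  have hKer : C S.rightHom.ker :=
    hIso _ _ ((MonoidHom.ofInjective S.inl_injective).trans
      (MulEquiv.subgroupCongr S.range_inl_eq_ker_rightHom)) hN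
  exact hExt E S.rightHom.ker hKer
    (hIso _ _ (QuotientGroup.quotientKerEquivOfSurjective _ S.rightHom_surjective).symm hG)

theorem ClosedExt.prod (hExt : ClosedExt C) (hIso : ClosedIso C)
    {P Q : Type u} [Group P] [Group Q] (hP : C P) (hQ : C Q) : C (P × Q) :=
  hExt.of_groupExtension hIso
    { inl := MonoidHom.inl P Q
      rightHom := MonoidHom.snd P Q
      inl_injective := fun _ _ h => congrArg Prod.fst h
      range_inl_eq_ker_rightHom := by ext ⟨p, q⟩; simp [Subgroup.mem_prod, eq_comm]
      rightHom_surjective := Prod.snd_surjective } hP hQ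

theorem ClosedExt.regularWreathProduct (hExt : ClosedExt C) (hIso : ClosedIso C)
    (hPow : ClosedPow C) {P Q : Type u} [Group P] [Group Q] (hP : C P) (hQ : C Q) :
    C (P ≀ᵣ Q) :=
  hExt.of_groupExtension hIso
    { inl :=
        { toFun := fun f => ⟨f, 1⟩
          map_one' := rfl
          map_mul' := fun f g => by ext <;> simp }
      rightHom := RegularWreathProduct.rightHom
      inl_injective := fun _ _ h => congrArg RegularWreathProduct.left h
      range_inl_eq_ker_rightHom := by
        ext ⟨f, q⟩
        simp [MonoidHom.mem_ker, RegularWreathProduct.ext_iff, eq_comm]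
      rightHom_surjective := fun q => ⟨RegularWreathProduct.inl q, rfl⟩ } (hPow P Q hP hQ) hQ

/-- `SeparatedFromOne C g` means that some homomorphism to a group in `C` does not kill `g`. Unlike
in `Residually`, it need not be surjective, and the group of `g` may live in any universe. -/
def SeparatedFromOne (C : GClass.{u}) {F : Type v} [Group F] (g : F) : Prop :=
  ∃ (Q : Type u) (_ : Group Q) (σ : F →* Q), C Q ∧ σ g ≠ 1

theorem SeparatedFromOne.exists_surjective (hSub : ClosedSub C) {F : Type v} [Group F] {g : F}
    (hg : SeparatedFromOne C g) :
    ∃ (Q : Type u) (_ : Group Q) (σ : F →* Q), C Q ∧ Function.Surjective σ ∧ σ g ≠ 1 := by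
  obtain ⟨Q, _, σ, hQ, hσg⟩ := hg
  exact ⟨σ.range, inferInstance, σ.rangeRestrict, hSub Q _ hQ, σ.rangeRestrict_surjective,
    fun h => hσg (congrArg Subtype.val h)⟩

theorem IsRootClass.exists_hom_forall_ne_one (hC : IsRootClass C) {F : Type v} [Group F]
    {s : Set F} (hs : s.Finite) (hsep : ∀ g ∈ s, SeparatedFromOne C g) :
    ∃ (Q : Type u) (_ : Group Q) (σ : F →* Q), C Q ∧ ∀ g ∈ s, σ g ≠ 1 := by
  obtain ⟨⟨G, _, hG, -⟩, hIso, -, hExt, -⟩ := hC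
  induction s, hs using Set.Finite.induction_on with
  | empty => exact ⟨G, inferInstance, 1, hG, by simp⟩
  | @insert g s _ _ ih =>
    rw [Set.forall_mem_insert] at hsep
    obtain ⟨P, _, τ, hP, hτ⟩ := hsep.1
    obtain ⟨Q, _, σ, hQ, hσ⟩ := ih hsep.2
    refine ⟨P × Q, inferInstance, τ.prod σ, hExt.prod hIso hP hQ, ?_⟩
    rw [Set.forall_mem_insert]
    exact ⟨fun h => hτ (congrArg Prod.fst h),
      fun k hk h => hσ k hk (congrArg Prod.snd h)⟩

end RootClass

section LabelledCayleyGraph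

variable {α P Q : Type*} [Group P] [Group Q]

theorem map_freeGroup_mk_cons (φ : FreeGroup α →* Q) (c : α × Bool) (L : List (α × Bool)) :
    φ (FreeGroup.mk (c :: L)) = φ (FreeGroup.mk [c]) * φ (FreeGroup.mk L) := by
  rw [← map_mul, FreeGroup.mul_mk, List.singleton_append]

/-- The edge of the Cayley graph of `φ` that is crossed when the letter `c` is read at the vertex
`q`. To match the multiplication of `P ≀ᵣ Q`, reading `c` leads from `q` to `(φ c)⁻¹ * q`; the edge
from `q` to `(φ y)⁻¹ * q` is encoded as `(y, q)`, and an inverse letter crosses it backwards. -/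
def cayleyEdge (φ : FreeGroup α →* Q) (q : Q) (c : α × Bool) : α × Q :=
  (c.1, if c.2 then q else φ (of c.1) * q)

theorem eq_or_eq_reverse_of_cayleyEdge_eq {φ : FreeGroup α →* Q} {p q : Q} {c d : α × Bool}
    (h : cayleyEdge φ p c = cayleyEdge φ q d) :
    (c = d ∧ p = q) ∨ (c = (d.1, !d.2) ∧ p = (φ (FreeGroup.mk [d]))⁻¹ * q) := by
  obtain ⟨y, b⟩ := c
  obtain ⟨z, b'⟩ := d
  obtain ⟨rfl, hq⟩ := Prod.mk.inj h
  have hpos : FreeGroup.mk [(y, true)] = of y := rfl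
  have hneg : FreeGroup.mk [(y, false)] = (of y)⁻¹ := rfl
  cases b <;> cases b' <;> simp_all [eq_inv_mul_iff_mul_eq]

theorem cayleyEdge_ne_of_isReduced {φ : FreeGroup α →* Q} {c d : α × Bool}
    {M S : List (α × Bool)} (hred : IsReduced (c :: M))
    (hφ : ∀ T, T <:+: c :: M → T ≠ [] → T ≠ c :: M → φ (FreeGroup.mk T) ≠ 1)
    (hS : S ++ [d] <+: M) :
    cayleyEdge φ (φ (FreeGroup.mk (c :: S)))⁻¹ d ≠ cayleyEdge φ 1 c := by
  obtain ⟨T, rfl⟩ := hS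
  intro h
  rcases eq_or_eq_reverse_of_cayleyEdge_eq h with ⟨-, hvertex⟩ | ⟨rfl, hvertex⟩
  · exact hφ (c :: S) ⟨[], d :: T, by simp⟩ (by simp) (by simp) (inv_eq_one.mp hvertex)
  · have hS_one : φ (FreeGroup.mk S) = 1 := by
      simpa only [map_freeGroup_mk_cons φ c S, mul_inv_rev, mul_one, mul_eq_right, inv_eq_one]
        using hvertex
    rcases eq_or_ne S [] with rfl | hS_ne
    · simp [isReduced_cons_cons] at hred
    · refine hφ S ⟨[c], (c.1, !c.2) :: T, by simp⟩ hS_ne (fun hS_eq => ?_) hS_one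
      have hlen := congrArg List.length hS_eq
      simp only [List.length_cons, List.length_append] at hlen
      lia

variable [DecidableEq α] [DecidableEq Q]

/-- The lift of `φ` to `P ≀ᵣ Q` whose `left` component at `q` multiplies the labels along the path
from `q` in the Cayley graph of `φ`, where the edge `e` is labelled `a` and all others `1`; an edge
crossed backwards contributes the inverse of its label. -/
def edgeLabelHom (φ : FreeGroup α →* Q) (e : α × Q) (a : P) : FreeGroup α →* P ≀ᵣ Q :=
  FreeGroup.lift fun y => ⟨fun q => if (y, q) = e then a else 1, φ (of y)⟩

theorem right_edgeLabelHom (φ : FreeGroup α →* Q) (e : α × Q) (a : P) (g : FreeGroup α) :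
    (edgeLabelHom φ e a g).right = φ g := by
  have h : RegularWreathProduct.rightHom.comp (edgeLabelHom φ e a) = φ := by
    ext y
    simp [edgeLabelHom]
  exact DFunLike.congr_fun h g

theorem left_edgeLabelHom_letter (φ : FreeGroup α →* Q) (e : α × Q) (a : P) (q : Q)
    (c : α × Bool) :
    (edgeLabelHom φ e a (FreeGroup.mk [c])).left q =
      if cayleyEdge φ q c = e then (if c.2 then a else a⁻¹) else 1 := by
  obtain ⟨y, _ | _⟩ := c <;> simp [edgeLabelHom, cayleyEdge, apply_ite (·⁻¹)]

theorem left_edgeLabelHom_mk_cons (φ : FreeGroup α →* Q) (e : α × Q) (a : P) (q : Q)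
    (c : α × Bool) (L : List (α × Bool)) :
    (edgeLabelHom φ e a (FreeGroup.mk (c :: L))).left q =
      (edgeLabelHom φ e a (FreeGroup.mk [c])).left q *
        (edgeLabelHom φ e a (FreeGroup.mk L)).left ((φ (FreeGroup.mk [c]))⁻¹ * q) := by
  rw [map_freeGroup_mk_cons, RegularWreathProduct.mul_left, Pi.mul_apply, right_edgeLabelHom]

theorem left_edgeLabelHom_mk_eq_one {φ : FreeGroup α →* Q} {e : α × Q} (a : P)
    {L : List (α × Bool)} {q : Q}
    (h : ∀ S c, S ++ [c] <+: L → cayleyEdge φ ((φ (FreeGroup.mk S))⁻¹ * q) c ≠ e) :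
    (edgeLabelHom φ e a (FreeGroup.mk L)).left q = 1 := by
  induction L generalizing q with
  | nil => rw [← FreeGroup.one_eq_mk, map_one, RegularWreathProduct.one_left, Pi.one_apply]
  | cons d M ih =>
    have hd : cayleyEdge φ q d ≠ e := by
      simpa [← FreeGroup.one_eq_mk] using h [] d (by simp)
    have hM : (edgeLabelHom φ e a (FreeGroup.mk M)).left ((φ (FreeGroup.mk [d]))⁻¹ * q) = 1 := by
      refine ih fun S c hS => ?_
      rw [← mul_assoc, ← mul_inv_rev, ← map_freeGroup_mk_cons]
      exact h (d :: S) c (by simpa using hS)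
    rw [left_edgeLabelHom_mk_cons, hM, left_edgeLabelHom_letter, if_neg hd, one_mul]

theorem edgeLabelHom_mk_cons_ne_one {φ : FreeGroup α →* Q} {a : P} (ha : a ≠ 1)
    {c : α × Bool} {M : List (α × Bool)} (hred : IsReduced (c :: M))
    (hφ : ∀ T, T <:+: c :: M → T ≠ [] → T ≠ c :: M → φ (FreeGroup.mk T) ≠ 1) :
    edgeLabelHom φ (cayleyEdge φ 1 c) a (FreeGroup.mk (c :: M)) ≠ 1 := by
  have htail : (edgeLabelHom φ (cayleyEdge φ 1 c) a (FreeGroup.mk M)).left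
      ((φ (FreeGroup.mk [c]))⁻¹ * 1) = 1 := by
    refine left_edgeLabelHom_mk_eq_one a fun S d hS => ?_
    rw [← mul_assoc, ← mul_inv_rev, ← map_freeGroup_mk_cons, mul_one]
    exact cayleyEdge_ne_of_isReduced hred hφ hS
  intro h
  have hlabel : (if c.2 then a else a⁻¹) = 1 := by
    have hleft := congrFun (congrArg RegularWreathProduct.left h) 1
    rwa [left_edgeLabelHom_mk_cons, htail, mul_one, left_edgeLabelHom_letter, if_pos rfl] at hleft
  split_ifs at hlabel
  · exact ha hlabel
  · exact ha (inv_eq_one.mp hlabel)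

end LabelledCayleyGraph

theorem IsRootClass.separatedFromOne_mk {C : GClass.{u}} (hC : IsRootClass C) {α : Type v}
    {L : List (α × Bool)} (hred : IsReduced L) (hne : L ≠ []) :
    SeparatedFromOne C (FreeGroup.mk L) := by
  classical
  induction hn : L.length using Nat.strong_induction_on generalizing L with
  | _ n ih =>
  let properSubwords := {T | T <:+: L ∧ T ≠ [] ∧ T ≠ L}
  have hfin : properSubwords.Finite :=
    L.sublists.finite_toSet.subset fun T hT => List.mem_sublists.mpr hT.1.sublist
  have hsep : ∀ g ∈ FreeGroup.mk '' properSubwords, SeparatedFromOne C g := by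
    rintro _ ⟨T, ⟨hinfix, hT, hTL⟩, rfl⟩
    have hlt : T.length < L.length :=
      hinfix.length_le.lt_of_ne fun hlen => hTL (hinfix.eq_of_length hlen)
    exact ih T.length (hn ▸ hlt) (hred.infix hinfix) hT rfl
  obtain ⟨Q, _, φ, hQ, hφ⟩ := hC.exists_hom_forall_ne_one (hfin.image FreeGroup.mk) hsep
  obtain ⟨⟨P, _, hP, _⟩, hIso, -, hExt, hPow⟩ := hC
  obtain ⟨a, ha⟩ := exists_ne (1 : P)
  obtain ⟨c, M, rfl⟩ := List.exists_cons_of_ne_nil hne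
  exact ⟨P ≀ᵣ Q, inferInstance, edgeLabelHom φ (cayleyEdge φ 1 c) a,
    hExt.regularWreathProduct hIso hPow hP hQ,
    edgeLabelHom_mk_cons_ne_one ha hred fun T hinfix hT hTL =>
      hφ _ ⟨T, ⟨hinfix, hT, hTL⟩, rfl⟩⟩

theorem stmt_3_general {C : GClass.{u}} (hC : IsRootClass C) {α : Type v} {g : FreeGroup α}
    (hg : g ≠ 1) :
    ∃ (Q : Type u) (_ : Group Q) (σ : FreeGroup α →* Q),
      C Q ∧ Function.Surjective σ ∧ σ g ≠ 1 := by
  classical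
  have hsep : SeparatedFromOne C (FreeGroup.mk g.toWord) :=
    hC.separatedFromOne_mk FreeGroup.isReduced_toWord (mt FreeGroup.toWord_eq_nil_iff.mp hg)
  rw [FreeGroup.mk_toWord] at hsep
  exact hsep.exists_surjective hC.2.2.1

/-- Proposition 3.3 (1): every free group is residually a `C`-group, for any root class `C`. -/
theorem stmt_3 (C : GClass.{u}) (hC : IsRootClass C) (α : Type u) :
    Residually C (FreeGroup α) :=
  fun _ hg => stmt_3_general hC hg
end

section
/- Let 𝒞 be a root class of groups and let Ω be a family of groups, each of which is residually a 𝒞-group. If a group G has a normal subgroup N such that G/N ∈ 𝒞 and N is a free product of a family of groups, each factor of which is either a free group or embeds into a member of Ω, then G is residually a 𝒞-group. -/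
universe u

/-!
A class closed under subgroups, extensions and powers `Y → X` contains the wreath products
`X ≀ᵣ Y`, and every homomorphism needed to separate an element from `1` is constructed with values
in such a wreath product:

* for an extension of `N` by `G ⧸ N`, by the Kaloujnine-Krasner embedding;
* for a free product, by induction on the length of a reduced word `x * l`. Let `h` be a
  homomorphism to a group of the class which is nontrivial on the letter `x` and on the nonempty
  prefixes of `l`. Write `i` for the factor of `x`. Over `h`, twist the `i`-th factor by conjugating
  with a function supported at `1`. The successive values of `h` along the word pass through `h x`
  exactly once as an endpoint of a syllable of the `i`-th factor, so the wreath coordinate of the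
  word at `h x` is nontrivial;
* for an infinite cyclic group, by elements of ever larger order in iterated wreath products. Free
  groups are then free products of infinite cyclic groups.
-/

open Monoid RegularWreathProduct

variable {C : GClass.{u}}

/-- `g` has a nontrivial image in some `C`-group, that is, `g` lies outside the `C`-residual of `G`.
Unlike `Residually`, this asks for no surjectivity and allows `G` in any universe. -/
def IsSeparated (C : GClass.{u}) {G : Type*} [Group G] (g : G) : Prop :=
  ∃ (Q : Type u) (_ : Group Q) (σ : G →* Q), C Q ∧ σ g ≠ 1

theorem IsSeparated.of_map {G H : Type*} [Group G] [Group H] (f : G →* H) {g : G}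
    (h : IsSeparated C (f g)) : IsSeparated C g := by
  obtain ⟨Q, _, σ, hQ, hσ⟩ := h
  exact ⟨Q, _, σ.comp f, hQ, hσ⟩

theorem residually_iff_isSeparated (hC : ClosedSub C) {G : Type u} [Group G] :
    Residually C G ↔ ∀ g : G, g ≠ 1 → IsSeparated C g := by
  refine forall₂_congr fun _ _ => ⟨fun ⟨Q, _, σ, hQ, _, hσ⟩ => ⟨Q, _, σ, hQ, hσ⟩, ?_⟩
  rintro ⟨Q, _, σ, hQ, hσ⟩
  exact ⟨σ.range, inferInstance, σ.rangeRestrict, hC Q σ.range hQ, σ.rangeRestrict_surjective,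
    fun h => hσ (congrArg Subtype.val h)⟩

theorem Residually.of_injective (hC : ClosedSub C) {G H : Type u} [Group G] [Group H]
    (hH : Residually C H) (f : G →* H) (hf : Function.Injective f) : Residually C G :=
  (residually_iff_isSeparated hC).2 fun _ hg =>
    .of_map f ((residually_iff_isSeparated hC).1 hH _ ((map_ne_one_iff f hf).2 hg))

namespace IsRootClass

theorem closedSub (hC : IsRootClass C) : ClosedSub C :=
  hC.2.2.1

theorem exists_mem_ne_one (hC : IsRootClass C) :
    ∃ (A : Type u) (_ : Group A) (a : A), C A ∧ a ≠ 1 := by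
  obtain ⟨⟨A, _, hA, _⟩, -⟩ := hC
  obtain ⟨a, ha⟩ := exists_ne (1 : A)
  exact ⟨A, _, a, hA, ha⟩

theorem of_injective (hC : IsRootClass C) {G H : Type u} [Group G] [Group H] (f : G →* H)
    (hf : Function.Injective f) (hH : C H) : C G := by
  have ⟨_, closedIso, _⟩ := hC
  exact closedIso _ _ (MonoidHom.ofInjective hf).symm (hC.closedSub H f.range hH)

theorem of_ker (hC : IsRootClass C) {G Q : Type u} [Group G] [Group Q] (f : G →* Q)
    (hker : C f.ker) (hQ : C Q) : C G := by
  have ⟨_, closedIso, _, closedExt, _⟩ := hC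
  exact closedExt G f.ker hker
    (closedIso _ _ (QuotientGroup.quotientKerEquivRange f).symm (hC.closedSub Q f.range hQ))

theorem wreath (hC : IsRootClass C) {A Q : Type u} [Group A] [Group Q] (hA : C A) (hQ : C Q) :
    C (A ≀ᵣ Q) := by
  have right_eq_one (x : (rightHom : A ≀ᵣ Q →* Q).ker) : x.1.right = 1 := x.2
  let leftHom : (rightHom : A ≀ᵣ Q →* Q).ker →* (Q → A) :=
    MonoidHom.mk' (fun x => x.1.left) fun x y => by ext q; simp [right_eq_one]
  have leftHom_injective : Function.Injective leftHom := fun x y hxy =>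
    Subtype.ext (RegularWreathProduct.ext hxy ((right_eq_one x).trans (right_eq_one y).symm))
  have ⟨_, _, _, _, closedPow⟩ := hC
  exact hC.of_ker rightHom (hC.of_injective leftHom leftHom_injective (closedPow A Q hA hQ)) hQ

theorem prod (hC : IsRootClass C) {A B : Type u} [Group A] [Group B] (hA : C A) (hB : C B) :
    C (A × B) := by
  let constHom : A × B →* A ≀ᵣ B := MonoidHom.mk' (fun x => ⟨fun _ => x.1, x.2⟩) fun _ _ => rfl
  have constHom_injective : Function.Injective constHom := fun x y hxy =>
    Prod.ext (congrFun (congrArg left hxy) 1) (congrArg right hxy)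
  exact hC.of_injective constHom constHom_injective (hC.wreath hA hB)

theorem exists_hom_forall_mem_ne_one (hC : IsRootClass C) {G : Type*} [Group G] (L : List G) :
    ∃ (Q : Type u) (_ : Group Q) (σ : G →* Q), C Q ∧ ∀ g ∈ L, IsSeparated C g → σ g ≠ 1 := by
  induction L with
  | nil =>
    obtain ⟨A, _, -, hA, -⟩ := hC.exists_mem_ne_one
    exact ⟨A, _, 1, hA, by simp⟩
  | cons g L ih =>
    obtain ⟨Q, _, σ, hQ, hσ⟩ := ih
    by_cases hg : IsSeparated C g
    · obtain ⟨X, _, τ, hX, hτ⟩ := hg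
      refine ⟨X × Q, _, τ.prod σ, hC.prod hX hQ, List.forall_mem_cons.2 ⟨fun _ h => ?_, ?_⟩⟩
      · exact hτ (congrArg Prod.fst h)
      · exact fun k hk hsep h => hσ k hk hsep (congrArg Prod.snd h)
    · exact ⟨Q, _, σ, hQ, List.forall_mem_cons.2 ⟨fun h => absurd h hg, hσ⟩⟩

end IsRootClass

/-- The Kaloujnine-Krasner homomorphism from an extension of `N` by `G ⧸ N` to a wreath product,
followed by a homomorphism `σ` on `N`. The transversal is `Quotient.out`, which need not send `1`
to `1`. -/
noncomputable def kaloujnineKrasner {G X : Type*} [Group G] [Group X] (N : Subgroup G) [N.Normal]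
    (σ : N →* X) : G →* X ≀ᵣ (G ⧸ N) :=
  MonoidHom.mk' (fun g => ⟨fun q => σ ⟨q.out⁻¹ * g * ((g : G ⧸ N)⁻¹ * q).out, by
      simp [← QuotientGroup.eq_one_iff]⟩, g⟩) fun g k => by
    ext q
    · simp only [mul_left, Pi.mul_apply, ← map_mul]
      congr 1
      ext
      simp [mul_assoc]
    · rfl

theorem IsRootClass.residually_of_quotient (hC : IsRootClass C) {G : Type u} [Group G]
    (N : Subgroup G) [N.Normal] (hQ : C (G ⧸ N)) (hN : Residually C N) : Residually C G := by
  rw [residually_iff_isSeparated hC.closedSub] at hN ⊢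
  intro g hg
  by_cases hgN : g ∈ N
  · let t : G := (1 : G ⧸ N).out
    have hconj_mem : t⁻¹ * g * t ∈ N := by
      simpa using ‹N.Normal›.conj_mem g hgN t⁻¹
    have hconj_ne : (⟨t⁻¹ * g * t, hconj_mem⟩ : N) ≠ 1 := fun h =>
      hg (by simpa [mul_assoc, inv_mul_eq_one] using congrArg Subtype.val h)
    obtain ⟨X, _, σ, hX, hσ⟩ := hN _ hconj_ne
    refine ⟨_, _, kaloujnineKrasner N σ, hC.wreath hX hQ, fun h => hσ ?_⟩
    have hleft := congrFun (congrArg left h) 1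
    simpa [kaloujnineKrasner, (QuotientGroup.eq_one_iff g).2 hgN] using hleft
  · exact ⟨_, _, QuotientGroup.mk' N, hQ, fun h => hgN ((QuotientGroup.eq_one_iff g).1 h)⟩

section FreeProduct

variable {ι : Type*} {F : ι → Type*} [∀ i, Group (F i)] {A Q : Type*} [Group A] [Group Q]

/-- The lift of `h` to the wreath product which sends the `i`-th factor to `h` conjugated by the
function `φ i`. -/
def wreathTwist (h : CoprodI F →* Q) (φ : ι → Q → A) : CoprodI F →* A ≀ᵣ Q :=
  CoprodI.lift fun i =>
    (MulAut.conj (⟨φ i, 1⟩ : A ≀ᵣ Q)).toMonoidHom.comp (inl.comp (h.comp CoprodI.of))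

theorem wreathTwist_of_mul_left (h : CoprodI F →* Q) (φ : ι → Q → A) {i : ι} (x : F i)
    (g : CoprodI F) (y : Q) :
    (wreathTwist h φ (CoprodI.of x * g)).left y =
      φ i y * (φ i ((h (CoprodI.of x))⁻¹ * y))⁻¹ *
        (wreathTwist h φ g).left ((h (CoprodI.of x))⁻¹ * y) := by
  simp [wreathTwist, mul_assoc]

/-- The element of the free product spelled by a list of letters. It agrees with
`Monoid.CoprodI.Word.prod`, but the list need not be reduced. -/
def spell (l : List (Σ i, F i)) : CoprodI F :=
  (l.map fun p => CoprodI.of p.2).prod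

theorem spell_cons (p : Σ i, F i) (l : List (Σ i, F i)) :
    spell (p :: l) = CoprodI.of p.2 * spell l :=
  List.prod_cons

variable {h : CoprodI F →* Q} {φ : ι → Q → A}

theorem wreathTwist_spell_left_eq_one (hφ : ∀ i, ∀ z ≠ 1, φ i z = 1) {l : List (Σ i, F i)} {y : Q}
    (hl : ∀ s, s <+: l → h (spell s) ≠ y) : (wreathTwist h φ (spell l)).left y = 1 := by
  induction l generalizing y with
  | nil => simp [spell]
  | cons p l ih =>
    have hstart : y ≠ 1 := by simpa [spell] using (hl [] List.nil_prefix).symm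
    have hnext : ∀ s, s <+: l → h (spell s) ≠ (h (CoprodI.of p.2))⁻¹ * y := fun s hs heq =>
      hl (p :: s) ((List.prefix_cons_inj p).2 hs) (by rw [spell_cons, map_mul, heq]; group)
    have hend : (h (CoprodI.of p.2))⁻¹ * y ≠ 1 := by
      simpa [spell] using (hnext [] List.nil_prefix).symm
    rw [spell_cons, wreathTwist_of_mul_left, hφ _ _ hstart, hφ _ _ hend, ih hnext]
    simp

theorem wreathTwist_spell_left_one (hφ : ∀ i, ∀ z ≠ 1, φ i z = 1) {l : List (Σ i, F i)}
    (hl : ∀ s, s <+: l → s ≠ [] → h (spell s) ≠ 1) (hhead : ∀ p ∈ l.head?, φ p.1 = 1) :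
    (wreathTwist h φ (spell l)).left 1 = 1 := by
  cases l with
  | nil => simp [spell]
  | cons p l =>
    have hnext : ∀ s, s <+: l → h (spell s) ≠ (h (CoprodI.of p.2))⁻¹ * 1 := fun s hs heq =>
      hl (p :: s) ((List.prefix_cons_inj p).2 hs) (List.cons_ne_nil p s)
        (by rw [spell_cons, map_mul, heq]; group)
    rw [spell_cons, wreathTwist_of_mul_left, hhead p rfl, wreathTwist_spell_left_eq_one hφ hnext]
    simp

theorem wreathTwist_of_mul_spell_left (hφ : ∀ i, ∀ z ≠ 1, φ i z = 1) {i : ι} {x : F i}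
    (hx : h (CoprodI.of x) ≠ 1) {l : List (Σ i, F i)}
    (hl : ∀ s, s <+: l → s ≠ [] → h (spell s) ≠ 1) (hhead : ∀ p ∈ l.head?, φ p.1 = 1) :
    (wreathTwist h φ (CoprodI.of x * spell l)).left (h (CoprodI.of x)) = (φ i 1)⁻¹ := by
  rw [wreathTwist_of_mul_left, hφ i _ hx, inv_mul_cancel, wreathTwist_spell_left_one hφ hl hhead]
  simp

theorem IsRootClass.isSeparated_of_mul_spell (hC : IsRootClass C) {i : ι} {x : F i}
    (hx : IsSeparated C (CoprodI.of x : CoprodI F)) {l : List (Σ i, F i)}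
    (hl : ∀ s, s <+: l → s ≠ [] → IsSeparated C (spell s)) (hhead : ∀ p ∈ l.head?, p.1 ≠ i) :
    IsSeparated C (CoprodI.of x * spell l) := by
  classical
  obtain ⟨H, _, h, hH, hh⟩ :=
    hC.exists_hom_forall_mem_ne_one (CoprodI.of x :: l.inits.map spell)
  have hh_letter : h (CoprodI.of x) ≠ 1 := hh _ List.mem_cons_self hx
  have hh_prefix (s) (hs : s <+: l) (hs₀ : s ≠ []) : h (spell s) ≠ 1 :=
    hh _ (.tail _ (List.mem_map_of_mem ((List.mem_inits s l).2 hs))) (hl s hs hs₀)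
  obtain ⟨A, _, a, hA, ha⟩ := hC.exists_mem_ne_one
  let φ : ι → H → A := Pi.mulSingle i (Pi.mulSingle 1 a)
  have hφ (j : ι) (z : H) (hz : z ≠ 1) : φ j z = 1 := by
    rcases eq_or_ne j i with rfl | hj
    · simp [φ, hz]
    · simp [φ, hj]
  have hφ_head (p) (hp : p ∈ l.head?) : φ p.1 = 1 := Pi.mulSingle_eq_of_ne (hhead p hp) _
  refine ⟨_, _, wreathTwist h φ, hC.wreath hA hH, fun hone => ha ?_⟩
  have hleft := wreathTwist_of_mul_spell_left hφ hh_letter hh_prefix hφ_head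
  rw [hone] at hleft
  simpa [φ] using hleft.symm

theorem IsRootClass.isSeparated_spell (hC : IsRootClass C)
    (hF : ∀ i (x : F i), x ≠ 1 → IsSeparated C x) (l : List (Σ i, F i)) (hl : l ≠ [])
    (hne : ∀ p ∈ l, p.2 ≠ 1) (hchain : l.IsChain fun p q => p.1 ≠ q.1) :
    IsSeparated C (spell l) := by
  classical
  match l with
  | ⟨i, x⟩ :: l =>
    have hletter : IsSeparated C (CoprodI.of x : CoprodI F) :=
      .of_map (CoprodI.lift (Pi.mulSingle i (MonoidHom.id (F i)))) <| by
        simpa using hF i x (hne _ List.mem_cons_self)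
    have hprefix (s) (hs : s <+: l) (hs₀ : s ≠ []) : IsSeparated C (spell s) :=
      have : s.length < l.length + 1 := Nat.lt_succ_of_le hs.length_le
      isSeparated_spell hC hF s hs₀ (fun p hp => hne p (.tail _ (hs.subset hp)))
        (hchain.tail.prefix hs)
    rw [spell_cons]
    exact hC.isSeparated_of_mul_spell hletter hprefix fun p hp =>
      ((List.isChain_cons.1 hchain).1 p hp).symm
termination_by l.length

theorem IsRootClass.isSeparated_coprodI (hC : IsRootClass C)
    (hF : ∀ i (x : F i), x ≠ 1 → IsSeparated C x) (g : CoprodI F) (hg : g ≠ 1) :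
    IsSeparated C g := by
  classical
  let w := CoprodI.Word.equiv g
  have hspell : spell w.toList = g := CoprodI.Word.equiv.symm_apply_apply g
  rw [← hspell]
  refine hC.isSeparated_spell hF w.toList (fun hnil => hg ?_) w.ne_one w.chain_ne
  rw [← hspell, hnil, spell, List.map_nil, List.prod_nil]

end FreeProduct

theorem IsRootClass.residually_coprodI (hC : IsRootClass C) {ι : Type u} {F : ι → Type u}
    [∀ i, Group (F i)] (hF : ∀ i, Residually C (F i)) : Residually C (CoprodI F) := by
  simp only [residually_iff_isSeparated hC.closedSub] at hF ⊢
  exact hC.isSeparated_coprodI hF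

theorem wreath_mulSingle_pow_left_one {A Q : Type*} [Group A] [Group Q] [DecidableEq Q] (a : A)
    {q : Q} {n : ℕ} (hq : ∀ k, 0 < k → k ≤ n → q ^ k ≠ 1) :
    ((⟨Pi.mulSingle 1 a, q⟩ : A ≀ᵣ Q) ^ (n + 1)).left 1 = a := by
  induction n with
  | zero => simp
  | succ n ih =>
    have hright : ((⟨Pi.mulSingle 1 a, q⟩ : A ≀ᵣ Q) ^ (n + 1)).right = q ^ (n + 1) := by
      rw [← rightHom_eq_right, map_pow, rightHom_eq_right]
    have hq_succ : (q ^ (n + 1))⁻¹ * 1 ≠ 1 := by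
      simpa using hq (n + 1) n.succ_pos le_rfl
    calc ((⟨Pi.mulSingle 1 a, q⟩ : A ≀ᵣ Q) ^ (n + 1 + 1)).left 1
        = ((⟨Pi.mulSingle 1 a, q⟩ : A ≀ᵣ Q) ^ (n + 1)).left 1 *
            (Pi.mulSingle 1 a : Q → A) ((q ^ (n + 1))⁻¹ * 1) := by
          rw [pow_succ, mul_left, Pi.mul_apply, hright]
      _ = a := by
          rw [ih fun k hk hkn => hq k hk (hkn.trans n.le_succ), Pi.mulSingle_eq_of_ne hq_succ,
            mul_one]

namespace IsRootClass

theorem exists_forall_pow_ne_one (hC : IsRootClass C) (n : ℕ) :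
    ∃ (Q : Type u) (_ : Group Q) (q : Q), C Q ∧ ∀ k, 0 < k → k ≤ n → q ^ k ≠ 1 := by
  classical
  obtain ⟨A, _, a, hA, ha⟩ := hC.exists_mem_ne_one
  induction n with
  | zero => exact ⟨A, _, 1, hA, by omega⟩
  | succ n ih =>
    obtain ⟨Q, _, q, hQ, hq⟩ := ih
    refine ⟨A ≀ᵣ Q, _, ⟨Pi.mulSingle 1 a, q⟩, hC.wreath hA hQ, fun k hk hkn hpow => ha ?_⟩
    obtain ⟨m, rfl⟩ := Nat.exists_eq_add_one.2 hk
    have hleft := wreath_mulSingle_pow_left_one a (q := q) (n := m) fun j hj hjm =>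
      hq j hj (by omega)
    rw [← hleft, hpow, one_left, Pi.one_apply]

theorem isSeparated_freeGroup_unit (hC : IsRootClass C) (g : FreeGroup Unit) (hg : g ≠ 1) :
    IsSeparated C g := by
  obtain ⟨n, rfl⟩ := FreeGroup.freeGroupUnitEquivInt.symm.surjective g
  have hn : n ≠ 0 := by rintro rfl; exact hg rfl
  obtain ⟨Q, _, q, hQ, hq⟩ := hC.exists_forall_pow_ne_one n.natAbs
  refine ⟨Q, _, FreeGroup.lift fun _ => q, hQ, ?_⟩
  have hpow : q ^ n.natAbs ≠ 1 := hq _ (Int.natAbs_pos.2 hn) le_rfl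
  simpa [FreeGroup.freeGroupUnitEquivInt, pow_natAbs_eq_one] using hpow

theorem residually_freeGroup (hC : IsRootClass C) (β : Type u) : Residually C (FreeGroup β) :=
  (residually_iff_isSeparated hC.closedSub).2 fun _ hg =>
    .of_map freeGroupEquivCoprodI.toMonoidHom <|
      hC.isSeparated_coprodI (fun _ => hC.isSeparated_freeGroup_unit) _
        ((map_ne_one_iff _ freeGroupEquivCoprodI.injective).2 hg)

end IsRootClass

/-- Deduction of Theorem 1 from Proposition 3.4: if `C` is a root class, `Ω` is a family of
residually `C`-groups, `N ⊴ G` with `G/N ∈ C`, and `N` is a free product of a family of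
groups each of which is free or embeds into a member of `Ω`, then `G` is residually a
`C`-group. -/
theorem stmt_18 (C : GClass.{u}) (hC : IsRootClass C)
    (κ : Type u) (Ω : κ → Type u) [∀ k, Group (Ω k)]
    (hΩ : ∀ k, Residually C (Ω k))
    (G : Type u) [Group G] (N : Subgroup G) [N.Normal] (hQ : C (G ⧸ N))
    (ι : Type u) (F : ι → Type u) [∀ i, Group (F i)]
    (e : N ≃* Monoid.CoprodI F)
    (hfac : ∀ i, (∃ β : Type u, Nonempty (F i ≃* FreeGroup β)) ∨
      ∃ (k : κ) (φ : F i →* Ω k), Function.Injective φ) :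
    Residually C G := by
  have hF (i : ι) : Residually C (F i) := by
    rcases hfac i with ⟨β, ⟨ψ⟩⟩ | ⟨k, φ, hφ⟩
    · exact (hC.residually_freeGroup β).of_injective hC.closedSub ψ.toMonoidHom ψ.injective
    · exact (hΩ k).of_injective hC.closedSub φ hφ
  have hN : Residually C N :=
    (hC.residually_coprodI hF).of_injective hC.closedSub e.toMonoidHom e.injective
  exact hC.residually_of_quotient N hQ hN
end
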